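/- For every incentive compatible correlated mechanism (μ, γ, π), the point defined by x_i[b,s,θ] := μ[b]·γ_i[b,s,θ], y[b,s,a] := μ[b]·π[b,s,a], and z_i[b_i,b'_i,s_i] := max_{s'_i ∈ S_i} f_i(x_i|b_i,b'_i,s_i,s'_i,P) is a feasible solution of LP(P, C, 0), and its objective value equals U(μ,γ,π). -/

import Mathlib

open Finset

noncomputable section

variable {n : ℕ} {B S : Fin n → Type*} {Θ A : Type*}

/-- Expected payment of agent `i` under truthful behavior. -/
def Fpay [∀ i, Fintype (B i)] [∀ i, Fintype (S i)] [Fintype Θ]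
    (P : (∀ i, B i) → (∀ i, S i) → Θ → ℝ) (μ : (∀ i, B i) → ℝ)
    (γ : Fin n → (∀ i, B i) → (∀ i, S i) → Θ → ℝ) (i : Fin n) : ℝ :=
  ∑ b, ∑ s, ∑ θ, μ b * P b s θ * γ i b s θ

/-- Expected payment of agent `i` deviating via `(φ, ψ)` while the others are truthful. -/
def FpayDev [∀ i, Fintype (B i)] [∀ i, Fintype (S i)] [Fintype Θ]
    (P : (∀ i, B i) → (∀ i, S i) → Θ → ℝ) (μ : (∀ i, B i) → ℝ)
    (γ : Fin n → (∀ i, B i) → (∀ i, S i) → Θ → ℝ) (i : Fin n)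
    (φ : B i → B i) (ψ : B i → S i → S i) : ℝ :=
  ∑ b, ∑ s, ∑ θ, μ b * P (Function.update b i (φ (b i))) s θ *
      γ i b (Function.update s i (ψ (b i) (s i))) θ

/-- Incentive compatibility of a correlated mechanism. -/
def IC [∀ i, Fintype (B i)] [∀ i, Fintype (S i)] [Fintype Θ]
    (c : ∀ i, B i → ℝ) (P : (∀ i, B i) → (∀ i, S i) → Θ → ℝ)
    (μ : (∀ i, B i) → ℝ)
    (γ : Fin n → (∀ i, B i) → (∀ i, S i) → Θ → ℝ) : Prop :=
  ∀ (i : Fin n) (φ : B i → B i) (ψ : B i → S i → S i),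
    Fpay P μ γ i - FpayDev P μ γ i φ ψ ≥ ∑ b, μ b * (c i (b i) - c i (φ (b i)))

/-- Principal's expected utility of a correlated mechanism. -/
def Util [∀ i, Fintype (B i)] [∀ i, Fintype (S i)] [Fintype Θ] [Fintype A]
    (P : (∀ i, B i) → (∀ i, S i) → Θ → ℝ) (u : A → Θ → ℝ)
    (μ : (∀ i, B i) → ℝ)
    (γ : Fin n → (∀ i, B i) → (∀ i, S i) → Θ → ℝ)
    (π : (∀ i, B i) → (∀ i, S i) → A → ℝ) : ℝ :=
  (∑ b, ∑ s, ∑ θ, μ b * P b s θ * ∑ a, π b s a * u a θ) - ∑ i, Fpay P μ γ i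

/-- Validity of a correlated mechanism (distributions and payment bounds). -/
def IsMech [∀ i, Fintype (B i)] [Fintype A] (M : ℝ)
    (μ : (∀ i, B i) → ℝ)
    (γ : Fin n → (∀ i, B i) → (∀ i, S i) → Θ → ℝ)
    (π : (∀ i, B i) → (∀ i, S i) → A → ℝ) : Prop :=
  (∀ b, 0 ≤ μ b) ∧ (∑ b, μ b) = 1 ∧
  (∀ i b s θ, γ i b s θ ∈ Set.Icc (0:ℝ) M) ∧
  (∀ b s a, 0 ≤ π b s a) ∧ (∀ b s, ∑ a, π b s a = 1)

/-- `f_i(x_i | b_i, b'_i, s_i, s'_i, ζ)`. -/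
def fLP [∀ i, Fintype (B i)] [∀ i, DecidableEq (B i)]
    [∀ i, Fintype (S i)] [∀ i, DecidableEq (S i)] [Fintype Θ]
    (i : Fin n) (x : (∀ j, B j) → (∀ j, S j) → Θ → ℝ)
    (bi bi' : B i) (si si' : S i)
    (ζ : (∀ j, B j) → (∀ j, S j) → Θ → ℝ) : ℝ :=
  ∑ b, ∑ s, ∑ θ,
    if b i = bi' ∧ s i = si then
      x (Function.update b i bi) (Function.update s i si') θ * ζ b s θ
    else 0

/-- Feasibility for `LP(ζ, Λ, ε)`. -/
def LPfeasible [∀ i, Fintype (B i)] [∀ i, DecidableEq (B i)]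
    [∀ i, Fintype (S i)] [∀ i, DecidableEq (S i)] [Fintype Θ] [Fintype A]
    (M : ℝ)
    (ζ : (∀ j, B j) → (∀ j, S j) → Θ → ℝ)
    (Λ : ∀ i, B i → B i → ℝ) (ε : ℝ)
    (x : Fin n → (∀ j, B j) → (∀ j, S j) → Θ → ℝ)
    (y : (∀ j, B j) → (∀ j, S j) → A → ℝ)
    (z : ∀ i, B i → B i → S i → ℝ)
    (μ : (∀ j, B j) → ℝ) : Prop :=
  (∀ i b s θ, 0 ≤ x i b s θ) ∧
  (∀ b s a, 0 ≤ y b s a) ∧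
  (∀ i (bi bi' : B i) si, 0 ≤ z i bi bi' si) ∧
  (∀ b, 0 ≤ μ b) ∧ (∑ b, μ b) = 1 ∧
  (∀ (i : Fin n) (bi bi' : B i),
    (∑ si, (fLP i (x i) bi bi si si ζ - z i bi bi' si)) ≥
      (∑ b, if b i = bi then μ b * Λ i bi bi' else 0) - ε) ∧
  (∀ (i : Fin n) (bi bi' : B i) (si si' : S i),
    z i bi bi' si ≥ fLP i (x i) bi bi' si si' ζ) ∧
  (∀ b s, (∑ a, y b s a) = μ b) ∧
  (∀ i b s θ, x i b s θ ≤ M * μ b)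

/-- Objective of `LP(ζ, Λ, ε)`. -/
def LPobj [∀ i, Fintype (B i)] [∀ i, Fintype (S i)] [Fintype Θ] [Fintype A]
    (u : A → Θ → ℝ)
    (ζ : (∀ j, B j) → (∀ j, S j) → Θ → ℝ)
    (x : Fin n → (∀ j, B j) → (∀ j, S j) → Θ → ℝ)
    (y : (∀ j, B j) → (∀ j, S j) → A → ℝ) : ℝ :=
  ∑ b, ∑ s, ∑ θ,
    ((∑ a, y b s a * ζ b s θ * u a θ) - ∑ i, x i b s θ * ζ b s θ)

theorem reindex_update [∀ i, Fintype (B i)] [∀ i, DecidableEq (B i)]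
    (i : Fin n) (bi bi' : B i) (G : (∀ j, B j) → (∀ j, B j) → ℝ) :
    (∑ b : (∀ j, B j), if b i = bi' then G (Function.update b i bi) b else 0) =
      ∑ b : (∀ j, B j), if b i = bi then G b (Function.update b i bi') else 0 := by
  rw [← Finset.sum_filter, ← Finset.sum_filter]
  refine Finset.sum_nbij' (fun b => Function.update b i bi)
    (fun b => Function.update b i bi') ?_ ?_ ?_ ?_ ?_
  · intro b _
    simp
  · intro b _
    simp
  · intro b hb
    have hb : b i = bi' := by simpa using hb
    subst hb
    simp
  · intro b hb
    have hb : b i = bi := by simpa using hb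
    subst hb
    simp
  · intro b hb
    have hb : b i = bi' := by simpa using hb
    subst hb
    simp

theorem sum_fLP [∀ i, Fintype (B i)] [∀ i, DecidableEq (B i)]
    [∀ i, Fintype (S i)] [∀ i, DecidableEq (S i)] [Fintype Θ]
    (i : Fin n) (x : (∀ j, B j) → (∀ j, S j) → Θ → ℝ)
    (bi bi' : B i) (g : S i → S i)
    (ζ : (∀ j, B j) → (∀ j, S j) → Θ → ℝ) :
    (∑ si, fLP i x bi bi' si (g si) ζ) =
      ∑ b : (∀ j, B j), if b i = bi then
        ∑ s : (∀ j, S j), ∑ θ, x b (Function.update s i (g (s i))) θ *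
          ζ (Function.update b i bi') s θ else 0 := by
  rw [← reindex_update i bi bi' (fun b b' =>
    ∑ s : (∀ j, S j), ∑ θ, x b (Function.update s i (g (s i))) θ * ζ b' s θ)]
  unfold fLP
  rw [Finset.sum_comm]
  refine Finset.sum_congr rfl fun b _ => ?_
  rw [Finset.sum_comm]
  by_cases hb : b i = bi'
  · simp only [hb, true_and, if_true]
    refine Finset.sum_congr rfl fun s _ => ?_
    rw [Finset.sum_comm]
    refine Finset.sum_congr rfl fun θ _ => ?_
    simp
  · simp [hb]

/-- every incentive compatible correlated mechanism induces a feasible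
solution of `LP(P, C, 0)` with objective value equal to the principal's utility. -/
theorem IC_mechanism_gives_LP_feasible_point
    [∀ i, Fintype (B i)] [∀ i, DecidableEq (B i)]
    [∀ i, Fintype (S i)] [∀ i, DecidableEq (S i)] [∀ i, Nonempty (S i)]
    [Fintype Θ] [Fintype A]
    (p : Θ → ℝ) (c : ∀ i, B i → ℝ)
    (P : (∀ i, B i) → (∀ i, S i) → Θ → ℝ)
    (u : A → Θ → ℝ) (M : ℝ) (hM : 0 < M)
    (hc : ∀ i bi, c i bi ∈ Set.Icc (0:ℝ) 1)
    (hu : ∀ a θ, u a θ ∈ Set.Icc (0:ℝ) 1)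
    (hp0 : ∀ θ, 0 ≤ p θ) (hp1 : (∑ θ, p θ) = 1)
    (hP0 : ∀ b s θ, 0 ≤ P b s θ)
    (hPp : ∀ b θ, (∑ s, P b s θ) = p θ)
    (hmarg : ∀ (i : Fin n) (b b' : ∀ j, B j), b i = b' i →
      ∀ (si : S i) (θ : Θ),
        (∑ s, if s i = si then P b s θ else 0) =
        (∑ s, if s i = si then P b' s θ else 0))
    (μ : (∀ j, B j) → ℝ)
    (γ : Fin n → (∀ j, B j) → (∀ j, S j) → Θ → ℝ)
    (π : (∀ j, B j) → (∀ j, S j) → A → ℝ)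
    (hmech : IsMech M μ γ π) (hIC : IC c P μ γ) :
    LPfeasible M P (fun i bi bi' => c i bi - c i bi') 0
        (fun i b s θ => μ b * γ i b s θ)
        (fun b s a => μ b * π b s a)
        (fun i bi bi' si => Finset.univ.sup' Finset.univ_nonempty
          (fun si' : S i => fLP i (fun b s θ => μ b * γ i b s θ) bi bi' si si' P))
        μ ∧
    LPobj u P (fun i b s θ => μ b * γ i b s θ) (fun b s a => μ b * π b s a) =
      Util P u μ γ π := by
  obtain ⟨hμ0, hμ1, hγ, hπ0, hπ1⟩ := hmech
  have hx0 : ∀ i b s θ, 0 ≤ μ b * γ i b s θ :=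
    fun i b s θ => mul_nonneg (hμ0 b) (hγ i b s θ).1
  have hf0 : ∀ i (bi bi' : B i) (si si' : S i),
      0 ≤ fLP i (fun b s θ => μ b * γ i b s θ) bi bi' si si' P := by
    intro i bi bi' si si'
    unfold fLP
    refine Finset.sum_nonneg fun b _ => Finset.sum_nonneg fun s _ =>
      Finset.sum_nonneg fun θ _ => ?_
    split_ifs
    · exact mul_nonneg (hx0 _ _ _ _) (hP0 _ _ _)
    · exact le_rfl
  have hz : ∀ i (bi bi' : B i) (si si' : S i),
      fLP i (fun b s θ => μ b * γ i b s θ) bi bi' si si' P ≤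
      Finset.univ.sup' Finset.univ_nonempty
        (fun si' : S i => fLP i (fun b s θ => μ b * γ i b s θ) bi bi' si si' P) :=
    fun i bi bi' si si' => Finset.le_sup'
      (fun si' : S i => fLP i (fun b s θ => μ b * γ i b s θ) bi bi' si si' P)
      (Finset.mem_univ si')
  refine ⟨⟨hx0, fun b s a => mul_nonneg (hμ0 b) (hπ0 b s a), ?_, hμ0, hμ1, ?_, hz, ?_, ?_⟩, ?_⟩
  · intro i bi bi' si
    exact (hf0 i bi bi' si si).trans (hz i bi bi' si si)
  · intro i bi bi'
    have hg : ∀ si : S i, ∃ t : S i, Finset.univ.sup' Finset.univ_nonempty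
        (fun si' : S i => fLP i (fun b s θ => μ b * γ i b s θ) bi bi' si si' P) =
        fLP i (fun b s θ => μ b * γ i b s θ) bi bi' si t P := by
      intro si
      obtain ⟨t, _, ht⟩ := Finset.exists_mem_eq_sup' Finset.univ_nonempty
        (fun si' : S i => fLP i (fun b s θ => μ b * γ i b s θ) bi bi' si si' P)
      exact ⟨t, ht⟩
    choose g hg using hg
    have h := hIC i (fun b => if b = bi then bi' else b)
      (fun b s => if b = bi then g s else s)
    have h1 := sum_fLP i (fun b s θ => μ b * γ i b s θ) bi bi' g P
    have h2 := sum_fLP i (fun b s θ => μ b * γ i b s θ) bi bi (fun s => s) P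
    simp only [hg, Finset.sum_sub_distrib, sub_zero]
    rw [h1, h2, ← Finset.sum_sub_distrib]
    unfold Fpay FpayDev at h
    rw [← Finset.sum_sub_distrib] at h
    refine le_of_eq_of_le ?_ (h.le.trans_eq ?_)
    · refine Finset.sum_congr rfl fun b _ => ?_
      by_cases hb : b i = bi
      · simp [hb]
      · simp [hb]
    · refine Finset.sum_congr rfl fun b _ => ?_
      by_cases hb : b i = bi
      · subst hb
        simp only [if_true, Function.update_eq_self]
        congr 1 <;>
          exact Finset.sum_congr rfl fun s _ => Finset.sum_congr rfl fun θ _ => by ring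
      · simp [hb]
  · intro b s
    rw [← Finset.mul_sum, hπ1, mul_one]
  · intro i b s θ
    have := mul_le_mul_of_nonneg_left (hγ i b s θ).2 (hμ0 b)
    linarith
  · unfold LPobj Util Fpay
    simp only [Finset.sum_sub_distrib]
    congr 1
    · refine Finset.sum_congr rfl fun b _ => Finset.sum_congr rfl fun s _ =>
        Finset.sum_congr rfl fun θ _ => ?_
      rw [Finset.mul_sum]
      exact Finset.sum_congr rfl fun a _ => by ring
    · rw [Finset.sum_comm (s := (Finset.univ : Finset (Fin n)))]
      refine Finset.sum_congr rfl fun b _ => ?_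
      rw [Finset.sum_comm (s := (Finset.univ : Finset (Fin n)))]
      refine Finset.sum_congr rfl fun s _ => ?_
      rw [Finset.sum_comm (s := (Finset.univ : Finset (Fin n)))]
      refine Finset.sum_congr rfl fun θ _ => Finset.sum_congr rfl fun i _ => by ring
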